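/- Let s, N_h, N_H be positive integers, let A be an s×s complex matrix with eigenvalue decomposition A = X Λ X⁻¹, where X is invertible and Λ = diag(λ_1, …, λ_s), and let Δt ∈ ℂ. Let M_h, K_h be N_h×N_h complex matrices and M_H, K_H be N_H×N_H complex matrices, and set B_h = I_s ⊗ M_h + Δt (A ⊗ K_h) and B_H = I_s ⊗ M_H + Δt (A ⊗ K_H). Let P be an N_h×N_H matrix and R an N_H×N_h matrix, and set 𝐏 = I_s ⊗ P and 𝐑 = I_s ⊗ R. Suppose each characteristic coarse block B_{H,λ_i Δt} = M_H + Δt λ_i K_H is invertible, and suppose the sN_h×sN_h preconditioner W is monolithic with respect to X with invertible blocks W_1, …, W_s. Define the smoother S = I − W⁻¹ B_h and, for a natural number ν, the two-grid iteration matrix T = (I − 𝐏 B_H⁻¹ 𝐑 B_h) S^ν. Then T is monolithic with respect to X with blocks T_i = ( I − P (M_H + Δt λ_i K_H)⁻¹ R (M_h + Δt λ_i K_h) ) · ( I − W_i⁻¹ (M_h + Δt λ_i K_h) )^ν, i.e. T = (X ⊗ I_{N_h}) · blockdiag(T_1, …, T_s) · (X⁻¹ ⊗ I_{N_h}); that is,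 the stage-coupled two-grid iteration decomposes into a two-grid iteration applied to each characteristic stage. -/

import Mathlib

open Matrix Kronecker

/-- Block-diagonal matrix indexed by `Fin s × Fin N` whose `i`-th diagonal block is `Y i`. -/
def blockDiagFst {m n : ℕ} (Y : Fin m → Matrix (Fin n) (Fin n) ℂ) :
    Matrix (Fin m × Fin n) (Fin m × Fin n) ℂ :=
  Matrix.of fun p q => if p.1 = q.1 then Y p.1 p.2 q.2 else 0

/-- Rectangular block-diagonal matrix. -/
def bdRect {s m n : ℕ} (Y : Fin s → Matrix (Fin m) (Fin n) ℂ) :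
    Matrix (Fin s × Fin m) (Fin s × Fin n) ℂ :=
  Matrix.of fun p q => if p.1 = q.1 then Y p.1 p.2 q.2 else 0

theorem bdRect_mul {s m n k : ℕ} (Y : Fin s → Matrix (Fin m) (Fin n) ℂ)
    (Z : Fin s → Matrix (Fin n) (Fin k) ℂ) :
    bdRect Y * bdRect Z = bdRect (fun i => Y i * Z i) := by
  ext ⟨a, b⟩ ⟨c, d⟩
  simp only [bdRect, Matrix.mul_apply, Matrix.of_apply, Fintype.sum_prod_type]
  rw [Finset.sum_eq_single a]
  · by_cases h : a = c <;> simp [h]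
  · intro e _ he
    simp [he.symm]
  · simp

theorem bdRect_one {s m : ℕ} :
    bdRect (fun _ : Fin s => (1 : Matrix (Fin m) (Fin m) ℂ)) = 1 := by
  ext ⟨a, b⟩ ⟨c, d⟩
  by_cases h : a = c <;> simp [bdRect, Matrix.one_apply, h]

/-- `T` is monolithic with respect to `X` with (rectangular) blocks `Y`. -/
def Mono {s m n : ℕ} (X : Matrix (Fin s) (Fin s) ℂ)
    (T : Matrix (Fin s × Fin m) (Fin s × Fin n) ℂ)
    (Y : Fin s → Matrix (Fin m) (Fin n) ℂ) : Prop :=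
  T = (X ⊗ₖ (1 : Matrix (Fin m) (Fin m) ℂ)) * bdRect Y *
    (X⁻¹ ⊗ₖ (1 : Matrix (Fin n) (Fin n) ℂ))

theorem kr_inv_mul {s : ℕ} (n : ℕ) {X : Matrix (Fin s) (Fin s) ℂ} (hX : IsUnit X.det) :
    (X⁻¹ ⊗ₖ (1 : Matrix (Fin n) (Fin n) ℂ)) * (X ⊗ₖ (1 : Matrix (Fin n) (Fin n) ℂ)) = 1 := by
  rw [← Matrix.mul_kronecker_mul, Matrix.nonsing_inv_mul _ hX, Matrix.one_mul,
    Matrix.one_kronecker_one]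

theorem kr_mul_inv {s : ℕ} (n : ℕ) {X : Matrix (Fin s) (Fin s) ℂ} (hX : IsUnit X.det) :
    (X ⊗ₖ (1 : Matrix (Fin n) (Fin n) ℂ)) * (X⁻¹ ⊗ₖ (1 : Matrix (Fin n) (Fin n) ℂ)) = 1 := by
  rw [← Matrix.mul_kronecker_mul, Matrix.mul_nonsing_inv _ hX, Matrix.one_mul,
    Matrix.one_kronecker_one]

theorem Mono.mul {s m n k : ℕ} {X : Matrix (Fin s) (Fin s) ℂ} (hX : IsUnit X.det)
    {T : Matrix (Fin s × Fin m) (Fin s × Fin n) ℂ} {Y : Fin s → Matrix (Fin m) (Fin n) ℂ}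
    {U : Matrix (Fin s × Fin n) (Fin s × Fin k) ℂ} {Z : Fin s → Matrix (Fin n) (Fin k) ℂ}
    (hT : Mono X T Y) (hU : Mono X U Z) : Mono X (T * U) (fun i => Y i * Z i) := by
  unfold Mono at *
  rw [← bdRect_mul, hT, hU]
  simp only [Matrix.mul_assoc]
  rw [← Matrix.mul_assoc (X⁻¹ ⊗ₖ (1 : Matrix (Fin n) (Fin n) ℂ)) (X ⊗ₖ _), kr_inv_mul n hX,
    Matrix.one_mul]

theorem Mono.one {s m : ℕ} {X : Matrix (Fin s) (Fin s) ℂ} (hX : IsUnit X.det) :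
    Mono X (1 : Matrix (Fin s × Fin m) (Fin s × Fin m) ℂ) (fun _ => 1) := by
  unfold Mono
  rw [bdRect_one, Matrix.mul_one, kr_mul_inv m hX]

theorem Mono.sub {s m n : ℕ} {X : Matrix (Fin s) (Fin s) ℂ}
    {T U : Matrix (Fin s × Fin m) (Fin s × Fin n) ℂ} {Y Z : Fin s → Matrix (Fin m) (Fin n) ℂ}
    (hT : Mono X T Y) (hU : Mono X U Z) : Mono X (T - U) (fun i => Y i - Z i) := by
  have : bdRect (fun i => Y i - Z i) = bdRect Y - bdRect Z := by
    ext ⟨a, b⟩ ⟨c, d⟩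
    by_cases h : a = c <;> simp [bdRect, h]
  unfold Mono at *
  rw [this, hT, hU, Matrix.mul_sub, Matrix.sub_mul]

theorem Mono.pow {s m : ℕ} {X : Matrix (Fin s) (Fin s) ℂ} (hX : IsUnit X.det)
    {T : Matrix (Fin s × Fin m) (Fin s × Fin m) ℂ} {Y : Fin s → Matrix (Fin m) (Fin m) ℂ}
    (hT : Mono X T Y) (ν : ℕ) : Mono X (T ^ ν) (fun i => Y i ^ ν) := by
  induction ν with
  | zero => simpa using Mono.one hX
  | succ k ih => simpa only [pow_succ] using ih.mul hX hT

theorem Mono.inv {s m : ℕ} {X : Matrix (Fin s) (Fin s) ℂ} (hX : IsUnit X.det)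
    {T : Matrix (Fin s × Fin m) (Fin s × Fin m) ℂ} {Y : Fin s → Matrix (Fin m) (Fin m) ℂ}
    (hT : Mono X T Y) (hY : ∀ i, IsUnit (Y i).det) : Mono X T⁻¹ (fun i => (Y i)⁻¹) := by
  have h1 : Mono X ((X ⊗ₖ (1 : Matrix (Fin m) (Fin m) ℂ)) * bdRect (fun i => (Y i)⁻¹) *
    (X⁻¹ ⊗ₖ (1 : Matrix (Fin m) (Fin m) ℂ))) (fun i => (Y i)⁻¹) := rfl
  have h2 := hT.mul hX h1
  have h3 : (fun i => Y i * (Y i)⁻¹) = fun _ => 1 :=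
    funext fun i => Matrix.mul_nonsing_inv _ (hY i)
  rw [h3] at h2
  exact Matrix.inv_eq_right_inv (h2.trans (Mono.one hX).symm)

theorem Mono.kron {s m n : ℕ} {X : Matrix (Fin s) (Fin s) ℂ} (d : Fin s → ℂ)
    (K : Matrix (Fin m) (Fin n) ℂ) :
    Mono X ((X * Matrix.diagonal d * X⁻¹) ⊗ₖ K) (fun i => d i • K) := by
  have : bdRect (fun i => d i • K) = Matrix.diagonal d ⊗ₖ K := by
    ext ⟨a, b⟩ ⟨c, e⟩
    by_cases h : a = c <;> simp [bdRect, h]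
  unfold Mono
  rw [this, ← Matrix.mul_kronecker_mul, ← Matrix.mul_kronecker_mul, Matrix.one_mul,
    Matrix.mul_one]

theorem Mono.one_kron {s m n : ℕ} {X : Matrix (Fin s) (Fin s) ℂ} (hX : IsUnit X.det)
    (K : Matrix (Fin m) (Fin n) ℂ) :
    Mono X ((1 : Matrix (Fin s) (Fin s) ℂ) ⊗ₖ K) (fun _ => K) := by
  have := Mono.kron (X := X) (fun _ => 1) K
  simpa [Matrix.mul_nonsing_inv _ hX] using this

theorem Mono.stage {s m : ℕ} {X A : Matrix (Fin s) (Fin s) ℂ} (hX : IsUnit X.det)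
    (lam : Fin s → ℂ) (hA : A = X * Matrix.diagonal lam * X⁻¹) (t : ℂ)
    (M K : Matrix (Fin m) (Fin m) ℂ) :
    Mono X ((1 : Matrix (Fin s) (Fin s) ℂ) ⊗ₖ M + t • (A ⊗ₖ K))
      (fun i => M + (t * lam i) • K) := by
  have h := (Mono.one_kron hX M).sub (Mono.kron (X := X) lam ((-t) • K))
  rw [← hA, Matrix.kronecker_smul] at h
  simpa [smul_smul, mul_comm] using h

theorem stmt7 (s Nh NH : ℕ) (hs : 0 < s) (hNh : 0 < Nh) (hNH : 0 < NH)
    (A X : Matrix (Fin s) (Fin s) ℂ) (lam : Fin s → ℂ)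
    (hX : IsUnit X.det)
    (hA : A = X * Matrix.diagonal lam * X⁻¹)
    (Δt : ℂ)
    (Mh Kh : Matrix (Fin Nh) (Fin Nh) ℂ) (MH KH : Matrix (Fin NH) (Fin NH) ℂ)
    (P : Matrix (Fin Nh) (Fin NH) ℂ) (R : Matrix (Fin NH) (Fin Nh) ℂ)
    (hBH : ∀ i, IsUnit (MH + (Δt * lam i) • KH).det)
    (W : Matrix (Fin s × Fin Nh) (Fin s × Fin Nh) ℂ)
    (Wb : Fin s → Matrix (Fin Nh) (Fin Nh) ℂ)
    (hW : (X⁻¹ ⊗ₖ (1 : Matrix (Fin Nh) (Fin Nh) ℂ)) * W *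
        (X ⊗ₖ (1 : Matrix (Fin Nh) (Fin Nh) ℂ)) = blockDiagFst Wb)
    (hWb : ∀ i, IsUnit (Wb i).det)
    (ν : ℕ) :
    (1 - ((1 : Matrix (Fin s) (Fin s) ℂ) ⊗ₖ P) *
          ((1 : Matrix (Fin s) (Fin s) ℂ) ⊗ₖ MH + Δt • (A ⊗ₖ KH))⁻¹ *
          ((1 : Matrix (Fin s) (Fin s) ℂ) ⊗ₖ R) *
          ((1 : Matrix (Fin s) (Fin s) ℂ) ⊗ₖ Mh + Δt • (A ⊗ₖ Kh))) *
        (1 - W⁻¹ * ((1 : Matrix (Fin s) (Fin s) ℂ) ⊗ₖ Mh + Δt • (A ⊗ₖ Kh))) ^ ν =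
      (X ⊗ₖ (1 : Matrix (Fin Nh) (Fin Nh) ℂ)) *
        blockDiagFst (fun i =>
          (1 - P * (MH + (Δt * lam i) • KH)⁻¹ * R * (Mh + (Δt * lam i) • Kh)) *
            (1 - (Wb i)⁻¹ * (Mh + (Δt * lam i) • Kh)) ^ ν) *
        (X⁻¹ ⊗ₖ (1 : Matrix (Fin Nh) (Fin Nh) ℂ)) := by
  have hWm : Mono X W Wb := by
    unfold Mono
    have e : bdRect Wb = blockDiagFst Wb := rfl
    rw [e, ← hW]
    simp only [← Matrix.mul_assoc]
    rw [kr_mul_inv Nh hX, Matrix.one_mul, Matrix.mul_assoc, kr_mul_inv Nh hX, Matrix.mul_one]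
  have hBh := Mono.stage hX lam hA Δt Mh Kh
  have hBHm := (Mono.stage hX lam hA Δt MH KH).inv hX hBH
  have key := ((Mono.one hX).sub ((((Mono.one_kron hX P).mul hX hBHm).mul hX
    (Mono.one_kron hX R)).mul hX hBh)).mul hX
    (((Mono.one hX).sub ((hWm.inv hX hWb).mul hX hBh)).pow hX ν)
  unfold Mono at key
  exact key
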